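/- arXiv:1811.11962 — 2 statements merged into one kernel-verified Lean document; each statement's English description precedes it below -/
import Mathlib

section
/- Let μ₂, μ₃ ∈ ℂ with positive real parts and μ₂ ≠ μ₃. Then for any z ∈ ℂ, the minimum over x₂, x₃ ∈ ℂ of ‖z·v[μ₂]' + x₂·v[μ₂] + x₃·v[μ₃]‖²_{H₂} equals |z|² |μ₂ − μ₃|² / ( (2 Re μ₂)³ · |μ₂ + conj μ₃|² ). -/
open MeasureTheory Complex

open Filter Topology ComplexConjugate

lemma I_mul_add_ne_zero {m : ℂ} (hm : 0 < m.re) (ω : ℝ) : I * ω + m ≠ 0 := by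
  intro h
  have := congrArg re h
  simp at this
  exact hm.ne' this

lemma norm_inv_I_mul_add_sq (m : ℂ) (ω : ℝ) :
    ‖(I * ω + m)⁻¹‖ ^ 2 = (m.re ^ 2 + (ω + m.im) ^ 2)⁻¹ := by
  rw [norm_inv, inv_pow, ← normSq_eq_norm_sq, normSq_apply]
  simp
  ring

lemma norm_inv_I_mul_add_sq_eq {m : ℂ} (hm : 0 < m.re) (ω : ℝ) :
    ‖(I * ω + m)⁻¹‖ ^ 2 =
      (m.re ^ 2)⁻¹ * (1 + (m.re⁻¹ * (ω + m.im)) ^ 2)⁻¹ := by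
  rw [norm_inv_I_mul_add_sq, ← mul_inv]
  congr 1
  field_simp

lemma integrable_norm_inv_I_mul_add_sq {m : ℂ} (hm : 0 < m.re) :
    Integrable fun ω : ℝ ↦ ‖(I * ω + m)⁻¹‖ ^ 2 := by
  simp_rw [norm_inv_I_mul_add_sq_eq hm]
  exact ((integrable_inv_one_add_sq.comp_mul_left'
    (inv_ne_zero hm.ne')).comp_add_right m.im).const_mul _

lemma integral_norm_inv_I_mul_add_sq {m : ℂ} (hm : 0 < m.re) :
    ∫ ω : ℝ, ‖(I * ω + m)⁻¹‖ ^ 2 = Real.pi / m.re := by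
  simp_rw [norm_inv_I_mul_add_sq_eq hm]
  rw [integral_const_mul,
    integral_add_right_eq_self (fun x : ℝ ↦ (1 + (m.re⁻¹ * x) ^ 2)⁻¹) m.im,
    Measure.integral_comp_mul_left (fun x : ℝ ↦ (1 + x ^ 2)⁻¹), integral_univ_inv_one_add_sq]
  rw [inv_inv, abs_of_pos hm, smul_eq_mul]
  field_simp

lemma continuous_inv_I_mul_add {m : ℂ} (hm : 0 < m.re) :
    Continuous fun ω : ℝ ↦ (I * ω + m)⁻¹ :=
  Continuous.inv₀ (by fun_prop) (I_mul_add_ne_zero hm)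

lemma memLp_two_inv_I_mul_add {m : ℂ} (hm : 0 < m.re) :
    MemLp (fun ω : ℝ ↦ (I * ω + m)⁻¹) 2 :=
  (memLp_two_iff_integrable_sq_norm (continuous_inv_I_mul_add hm).aestronglyMeasurable).2
    (integrable_norm_inv_I_mul_add_sq hm)

lemma integrable_inv_mul_inv {m n : ℂ} (hm : 0 < m.re) (hn : 0 < n.re) :
    Integrable fun ω : ℝ ↦ (I * ω + m)⁻¹ * (I * ω + n)⁻¹ :=
  (memLp_two_inv_I_mul_add hm).integrable_mul (memLp_two_inv_I_mul_add hn)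

lemma tendsto_inv_I_mul_add_cocompact (m : ℂ) :
    Tendsto (fun ω : ℝ ↦ (I * ω + m)⁻¹) (cocompact ℝ) (𝓝 0) := by
  refine tendsto_inv₀_cobounded.comp ?_
  rw [← tendsto_norm_atTop_iff_cobounded]
  refine tendsto_atTop_mono (f := fun ω : ℝ ↦ ‖ω‖ + -‖m‖) (fun ω ↦ ?_)
    (tendsto_atTop_add_const_right _ _ tendsto_norm_cocompact_atTop)
  have := norm_sub_le (I * ω + m) m
  simp only [add_sub_cancel_right, norm_mul, norm_I, norm_real, one_mul] at this
  linarith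

lemma hasDerivAt_I_mul_add (m : ℂ) (ω : ℝ) :
    HasDerivAt (fun ω : ℝ ↦ I * ω + m) I ω := by
  simpa using ((ofRealCLM.hasDerivAt (x := ω)).const_mul I).add_const m

lemma integral_inv_mul_inv_self {m : ℂ} (hm : 0 < m.re) :
    ∫ ω : ℝ, (I * ω + m)⁻¹ * (I * ω + m)⁻¹ = 0 := by
  have hlim := (tendsto_inv_I_mul_add_cocompact m).const_mul I
  rw [mul_zero] at hlim
  rw [integral_of_hasDerivAt_of_tendsto (f := fun ω : ℝ ↦ I * (I * ω + m)⁻¹) (fun ω ↦ ?_)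
    (integrable_inv_mul_inv hm hm) (hlim.mono_left atBot_le_cocompact)
    (hlim.mono_left atTop_le_cocompact), sub_zero]
  have h := I_mul_add_ne_zero hm ω
  refine (((hasDerivAt_I_mul_add m ω).inv h).const_mul I).congr_deriv ?_
  field_simp
  rw [I_sq, neg_neg]

lemma div_mem_slitPlane {p q : ℂ} (hp : 0 < p.re) (hq : 0 < q.re) : p / q ∈ slitPlane := by
  rw [mem_slitPlane_iff_not_le_zero]
  intro h
  obtain ⟨hre, him⟩ := le_def.1 h
  have hq0 : q ≠ 0 := fun h ↦ by simp [h] at hq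
  have h1 : p = p / q * q := by field_simp
  have h2 := congrArg re h1
  rw [mul_re, him] at h2
  simp only [zero_re, zero_im, zero_mul, sub_zero] at h2 hre
  nlinarith

lemma integral_inv_mul_inv {m n : ℂ} (hm : 0 < m.re) (hn : 0 < n.re) :
    ∫ ω : ℝ, (I * ω + m)⁻¹ * (I * ω + n)⁻¹ = 0 := by
  rcases eq_or_ne m n with rfl | hne
  · exact integral_inv_mul_inv_self hm
  have hlim : Tendsto (fun ω : ℝ ↦ log ((I * ω + m) / (I * ω + n))) (cocompact ℝ) (𝓝 0) := by
    have h1 : Tendsto (fun ω : ℝ ↦ (I * ω + m) / (I * ω + n)) (cocompact ℝ) (𝓝 1) := by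
      have h := ((tendsto_inv_I_mul_add_cocompact n).const_mul (m - n)).const_add 1
      rw [mul_zero, add_zero] at h
      refine h.congr fun ω ↦ ?_
      have := I_mul_add_ne_zero hn ω
      field_simp
      ring
    simpa using h1.clog (by simp)
  have hint := (integrable_inv_mul_inv hm hn).const_mul (I * (n - m))
  have key : ∫ ω : ℝ, I * (n - m) * ((I * ω + m)⁻¹ * (I * ω + n)⁻¹) = 0 := by
    rw [integral_of_hasDerivAt_of_tendsto (fun ω ↦ ?_) hint
      (hlim.mono_left atBot_le_cocompact) (hlim.mono_left atTop_le_cocompact), sub_zero]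
    have hp := I_mul_add_ne_zero hm ω
    have hq := I_mul_add_ne_zero hn ω
    refine (((hasDerivAt_I_mul_add m ω).div (hasDerivAt_I_mul_add n ω) hq).clog_real
      (div_mem_slitPlane (by simpa using hm) (by simpa using hn))).congr_deriv ?_
    simp only [Pi.div_apply]
    field_simp
    ring
  rw [integral_const_mul] at key
  exact (mul_eq_zero.1 key).resolve_left (mul_ne_zero I_ne_zero (sub_ne_zero.2 hne.symm))

lemma sub_div_sq_mul_eq {m n : ℂ} (hm : 0 < m.re) (hn : 0 < n.re) (hne : m ≠ n) (d : ℂ) (ω : ℝ) :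
    (I * ω - d) / ((I * ω + m) ^ 2 * (I * ω + n)) =
      (1 + (m + d) / (n - m)) * ((I * ω + m)⁻¹ * (I * ω + n)⁻¹)
        - (m + d) / (n - m) * ((I * ω + m)⁻¹ * (I * ω + m)⁻¹) := by
  have hp := I_mul_add_ne_zero hm ω
  have hq := I_mul_add_ne_zero hn ω
  have hnm := sub_ne_zero.2 hne.symm
  field_simp
  ring

lemma integrable_sub_div_sq_mul {m n : ℂ} (hm : 0 < m.re) (hn : 0 < n.re) (hne : m ≠ n) (d : ℂ) :
    Integrable fun ω : ℝ ↦ (I * ω - d) / ((I * ω + m) ^ 2 * (I * ω + n)) := by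
  simp_rw [sub_div_sq_mul_eq hm hn hne]
  exact ((integrable_inv_mul_inv hm hn).const_mul _).sub
    ((integrable_inv_mul_inv hm hm).const_mul _)

lemma integral_sub_div_sq_mul {m n : ℂ} (hm : 0 < m.re) (hn : 0 < n.re) (hne : m ≠ n) (d : ℂ) :
    ∫ ω : ℝ, (I * ω - d) / ((I * ω + m) ^ 2 * (I * ω + n)) = 0 := by
  simp_rw [sub_div_sq_mul_eq hm hn hne]
  rw [integral_sub ((integrable_inv_mul_inv hm hn).const_mul _)
    ((integrable_inv_mul_inv hm hm).const_mul _), integral_const_mul, integral_const_mul,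
    integral_inv_mul_inv hm hn, integral_inv_mul_inv hm hm, mul_zero, mul_zero, sub_zero]

lemma conj_I_mul_add_conj (a : ℂ) (ω : ℝ) : conj (I * ω + conj a) = -(I * ω - a) := by
  simp
  ring

lemma norm_I_mul_sub (a : ℂ) (ω : ℝ) : ‖I * ω - a‖ = ‖I * ω + conj a‖ := by
  rw [← norm_conj (I * ω + conj a), conj_I_mul_add_conj, norm_neg]

/-- The function `(s - a) (s - b) / ((s + conj a) ^ 2 (s + conj b))` on the imaginary axis
`s = I ω`; it spans the orthogonal complement of the two simple fractions in the span of
`(s + conj a)⁻²`, `(s + conj a)⁻¹` and `(s + conj b)⁻¹`. -/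
noncomputable def malmquist (a b : ℂ) (ω : ℝ) : ℂ :=
  (I * ω - a) * (I * ω - b) / ((I * ω + conj a) ^ 2 * (I * ω + conj b))

lemma norm_malmquist {a b : ℂ} (ha : 0 < a.re) (hb : 0 < b.re) (ω : ℝ) :
    ‖malmquist a b ω‖ = ‖(I * ω + conj a)⁻¹‖ := by
  have hp := norm_ne_zero_iff.2 (I_mul_add_ne_zero (m := conj a) (by simpa using ha) ω)
  have hq := norm_ne_zero_iff.2 (I_mul_add_ne_zero (m := conj b) (by simpa using hb) ω)
  rw [malmquist, norm_div, norm_mul, norm_mul, norm_pow, norm_I_mul_sub, norm_I_mul_sub, norm_inv]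
  field_simp

lemma malmquist_mul_conj {a b : ℂ} (ha : 0 < a.re) (hb : 0 < b.re) (y₂ y₃ : ℂ) (ω : ℝ) :
    malmquist a b ω * conj (y₂ * (I * ω + conj a)⁻¹ + y₃ * (I * ω + conj b)⁻¹) =
      -(conj y₂ * ((I * ω - b) / ((I * ω + conj a) ^ 2 * (I * ω + conj b)))
        + conj y₃ * ((I * ω - a) / ((I * ω + conj a) ^ 2 * (I * ω + conj b)))) := by
  have hp := I_mul_add_ne_zero (m := conj a) (by simpa using ha) ω
  have hq := I_mul_add_ne_zero (m := conj b) (by simpa using hb) ω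
  have hp' : I * ω - a ≠ 0 := by
    rw [← norm_ne_zero_iff, norm_I_mul_sub]; exact norm_ne_zero_iff.2 hp
  have hq' : I * ω - b ≠ 0 := by
    rw [← norm_ne_zero_iff, norm_I_mul_sub]; exact norm_ne_zero_iff.2 hq
  rw [map_add, map_mul, map_mul, map_inv₀, map_inv₀, conj_I_mul_add_conj, conj_I_mul_add_conj,
    malmquist]
  field_simp
  ring

lemma integral_norm_malmquist_add_sq {a b : ℂ} (ha : 0 < a.re) (hb : 0 < b.re) (hne : a ≠ b)
    (k y₂ y₃ : ℂ) :
    ∫ ω : ℝ, ‖k * malmquist a b ω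
        + (y₂ * (I * ω + conj a)⁻¹ + y₃ * (I * ω + conj b)⁻¹)‖ ^ 2 =
      ‖k‖ ^ 2 * (Real.pi / a.re)
        + ∫ ω : ℝ, ‖y₂ * (I * ω + conj a)⁻¹ + y₃ * (I * ω + conj b)⁻¹‖ ^ 2 := by
  have hm : 0 < (conj a).re := by simpa using ha
  have hn : 0 < (conj b).re := by simpa using hb
  have hmn : conj a ≠ conj b := fun h ↦ hne ((starRingEnd ℂ).injective h)
  let F (ω : ℝ) : ℂ := -(2 * k) *
    (conj y₂ * ((I * ω - b) / ((I * ω + conj a) ^ 2 * (I * ω + conj b)))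
      + conj y₃ * ((I * ω - a) / ((I * ω + conj a) ^ 2 * (I * ω + conj b))))
  have hcross : Integrable F :=
    (((integrable_sub_div_sq_mul hm hn hmn b).const_mul (conj y₂)).add
      ((integrable_sub_div_sq_mul hm hn hmn a).const_mul (conj y₃))).const_mul (-(2 * k))
  have hzero : ∫ ω : ℝ, (F ω).re = 0 := by
    refine (integral_re hcross).trans ?_
    simp only [F]
    rw [integral_const_mul, integral_add ((integrable_sub_div_sq_mul hm hn hmn b).const_mul _)
      ((integrable_sub_div_sq_mul hm hn hmn a).const_mul _), integral_const_mul,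
      integral_const_mul, integral_sub_div_sq_mul hm hn hmn, integral_sub_div_sq_mul hm hn hmn]
    simp
  have hsq : Integrable fun ω : ℝ ↦
      ‖y₂ * (I * ω + conj a)⁻¹ + y₃ * (I * ω + conj b)⁻¹‖ ^ 2 :=
    MemLp.integrable_norm_pow (p := 2) (((memLp_two_inv_I_mul_add hm).const_mul y₂).add
      ((memLp_two_inv_I_mul_add hn).const_mul y₃)) two_ne_zero
  have hfirst := (integrable_norm_inv_I_mul_add_sq hm).const_mul (‖k‖ ^ 2)
  have hpt (ω : ℝ) : ‖k * malmquist a b ω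
        + (y₂ * (I * ω + conj a)⁻¹ + y₃ * (I * ω + conj b)⁻¹)‖ ^ 2 =
      ‖k‖ ^ 2 * ‖(I * ω + conj a)⁻¹‖ ^ 2
        + ‖y₂ * (I * ω + conj a)⁻¹ + y₃ * (I * ω + conj b)⁻¹‖ ^ 2
        + (F ω).re := by
    have h2 (w : ℂ) : (2 * w).re = 2 * w.re := by simp
    rw [← normSq_eq_norm_sq, normSq_add, normSq_eq_norm_sq, normSq_eq_norm_sq, norm_mul,
      norm_malmquist ha hb, mul_pow, mul_assoc k, malmquist_mul_conj ha hb, ← h2]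
    simp only [F]
    congr 2
    ring
  simp_rw [hpt]
  refine (integral_add (hfirst.add hsq) hcross.re).trans ?_
  refine (congrArg₂ (· + ·) (integral_add hfirst hsq) hzero).trans ?_
  rw [integral_const_mul, integral_norm_inv_I_mul_add_sq hm, conj_re, add_zero]

lemma malmquist_eq {a b : ℂ} (ha : 0 < a.re) (hb : 0 < b.re) (hne : a ≠ b) (ω : ℝ) :
    malmquist a b ω =
      (conj a + a) * (conj a + b) / (conj b - conj a) * ((I * ω + conj a) ^ 2)⁻¹
      + (1 - (conj b + a) * (conj b + b) / (conj b - conj a) ^ 2) * (I * ω + conj a)⁻¹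
      + (conj b + a) * (conj b + b) / (conj b - conj a) ^ 2 * (I * ω + conj b)⁻¹ := by
  have hp := I_mul_add_ne_zero (m := conj a) (by simpa using ha) ω
  have hq := I_mul_add_ne_zero (m := conj b) (by simpa using hb) ω
  have hmn : conj b - conj a ≠ 0 :=
    sub_ne_zero.2 fun h ↦ hne.symm ((starRingEnd ℂ).injective h)
  rw [malmquist]
  field_simp
  ring

/-- For `Re μ₂, Re μ₃ > 0` with `μ₂ ≠ μ₃` and any `z ∈ ℂ`, the minimum over `x₂, x₃ ∈ ℂ` of
`‖z v[μ₂]' + x₂ v[μ₂] + x₃ v[μ₃]‖²_{H₂}` equals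
`|z|² |μ₂ − μ₃|² / ((2 Re μ₂)³ |μ₂ + conj μ₃|²)`. -/
theorem stmt_14 (μ₂ μ₃ z : ℂ) (h2 : 0 < μ₂.re) (h3 : 0 < μ₃.re) (hne : μ₂ ≠ μ₃) :
    IsLeast {r : ℝ | ∃ x₂ x₃ : ℂ, r = (1 / (2 * Real.pi)) *
        ∫ ω : ℝ, ‖z * (-((I * ω + (starRingEnd ℂ) μ₂) ^ 2)⁻¹)
          + x₂ * (I * ω + (starRingEnd ℂ) μ₂)⁻¹
          + x₃ * (I * ω + (starRingEnd ℂ) μ₃)⁻¹‖ ^ 2}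
      (‖z‖ ^ 2 * ‖μ₂ - μ₃‖ ^ 2 / ((2 * μ₂.re) ^ 3 * ‖μ₂ + (starRingEnd ℂ) μ₃‖ ^ 2)) := by
  have hmn : conj μ₃ - conj μ₂ ≠ 0 :=
    sub_ne_zero.2 fun h ↦ hne.symm ((starRingEnd ℂ).injective h)
  have h22 : conj μ₂ + μ₂ ≠ 0 := fun h ↦ by
    have := congrArg re h
    simp at this
    linarith
  have h23 : conj μ₂ + μ₃ ≠ 0 := fun h ↦ by
    have := congrArg re h
    simp at this
    linarith
  set c : ℂ := (conj μ₃ - conj μ₂) / ((conj μ₂ + μ₂) * (conj μ₂ + μ₃)) with hc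
  set γ : ℂ := (conj μ₃ + μ₂) * (conj μ₃ + μ₃) / (conj μ₃ - conj μ₂) ^ 2 with hγ
  have hnorm : 1 / (2 * Real.pi) * (‖-(z * c)‖ ^ 2 * (Real.pi / μ₂.re)) =
      ‖z‖ ^ 2 * ‖μ₂ - μ₃‖ ^ 2 / ((2 * μ₂.re) ^ 3 * ‖μ₂ + conj μ₃‖ ^ 2) := by
    have e1 : ‖conj μ₃ - conj μ₂‖ = ‖μ₂ - μ₃‖ := by
      rw [← map_sub, norm_conj, norm_sub_rev]
    have e2 : ‖conj μ₂ + μ₂‖ = 2 * μ₂.re := by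
      rw [add_comm, add_conj, norm_real, Real.norm_of_nonneg (by positivity)]
    have e3 : ‖conj μ₂ + μ₃‖ = ‖μ₂ + conj μ₃‖ := by
      rw [← norm_conj (conj μ₂ + μ₃), map_add, conj_conj]
    have h0 : ‖μ₂ + conj μ₃‖ ≠ 0 := e3 ▸ norm_ne_zero_iff.2 h23
    rw [norm_neg, norm_mul, hc, norm_div, norm_mul, e1, e2, e3]
    field_simp
  have hval (x₂ x₃ : ℂ) : (1 / (2 * Real.pi)) *
        ∫ ω : ℝ, ‖z * (-((I * ω + conj μ₂) ^ 2)⁻¹)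
          + x₂ * (I * ω + conj μ₂)⁻¹ + x₃ * (I * ω + conj μ₃)⁻¹‖ ^ 2 =
      ‖z‖ ^ 2 * ‖μ₂ - μ₃‖ ^ 2 / ((2 * μ₂.re) ^ 3 * ‖μ₂ + conj μ₃‖ ^ 2)
        + (1 / (2 * Real.pi)) * ∫ ω : ℝ, ‖(x₂ + z * c * (1 - γ)) * (I * ω + conj μ₂)⁻¹
          + (x₃ + z * c * γ) * (I * ω + conj μ₃)⁻¹‖ ^ 2 := by
    rw [← hnorm, ← mul_add, ← integral_norm_malmquist_add_sq h2 h3 hne]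
    congr! 5 with ω
    have h1 : c * ((conj μ₂ + μ₂) * (conj μ₂ + μ₃) / (conj μ₃ - conj μ₂)) = 1 := by
      rw [hc]
      field_simp
    rw [malmquist_eq h2 h3 hne, ← hγ]
    linear_combination (z * ((I * ω + conj μ₂) ^ 2)⁻¹) * h1
  constructor
  · refine ⟨-(z * c * (1 - γ)), -(z * c * γ), ?_⟩
    rw [hval]
    simp
  · rintro r ⟨x₂, x₃, rfl⟩
    rw [hval]
    have : 0 ≤ ∫ ω : ℝ, ‖(x₂ + z * c * (1 - γ)) * (I * ω + conj μ₂)⁻¹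
          + (x₃ + z * c * γ) * (I * ω + conj μ₃)⁻¹‖ ^ 2 :=
      integral_nonneg fun ω ↦ by positivity
    exact le_add_of_nonneg_right (by positivity)
end

section
/- Suppose Hᵣℓ → Hᵣ in the H₂ norm, where each Hᵣℓ and Hᵣ is a sum of r simple-pole terms, and Hᵣ(z) = Σⱼ ρⱼ/(z − λⱼ) with distinct poles λⱼ (Re λⱼ < 0) and nonzero residues ρⱼ. Assume further that for all sufficiently large ℓ, Hᵣℓ(z) = Σⱼ ρⱼℓ/(z − λⱼℓ) with distinct poles. Then, after suitable reordering to match poles, λⱼℓ → λⱼ and ρⱼℓ → ρⱼ for each j. -/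
open MeasureTheory Complex Filter

/-- The numerator of `∑ j, c j / (X - a j)` over the common denominator `∏ j, (X - a j)`. -/
noncomputable def poleNumerator {ι : Type*} [Fintype ι] [DecidableEq ι] (a c : ι → ℂ) :
    Polynomial ℂ :=
  ∑ j, Polynomial.C (c j) * Lagrange.nodal (Finset.univ.erase j) a

section PoleNumerator

variable {ι : Type*} [Fintype ι] [DecidableEq ι]

lemma degree_poleNumerator_lt (a c : ι → ℂ) :
    (poleNumerator a c).degree < Fintype.card ι := by
  rw [poleNumerator]
  refine (Polynomial.degree_sum_le _ _).trans_lt ?_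
  rw [Finset.sup_lt_iff (WithBot.bot_lt_coe _)]
  intro j _
  rw [Polynomial.C_mul']
  refine (Polynomial.degree_smul_le _ _).trans_lt ?_
  rw [Lagrange.degree_nodal, Finset.card_erase_of_mem (Finset.mem_univ j), Finset.card_univ]
  have : 0 < Fintype.card ι := Fintype.card_pos_iff.mpr ⟨j⟩
  exact_mod_cast Nat.sub_lt this one_pos

lemma eval_poleNumerator (a c : ι → ℂ) {z : ℂ} (hz : ∀ j, z ≠ a j) :
    (poleNumerator a c).eval z
      = (Lagrange.nodal Finset.univ a).eval z * ∑ j, c j / (z - a j) := by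
  rw [poleNumerator, Polynomial.eval_finsetSum, Finset.mul_sum]
  refine Finset.sum_congr rfl fun j _ => ?_
  have hj : z - a j ≠ 0 := sub_ne_zero.mpr (hz j)
  rw [Polynomial.eval_mul, Polynomial.eval_C, Lagrange.eval_nodal, Lagrange.eval_nodal,
    ← Finset.mul_prod_erase _ _ (Finset.mem_univ j)]
  field_simp

lemma eval_poleNumerator_node (a c : ι → ℂ) (j : ι) :
    (poleNumerator a c).eval (a j) = c j * ∏ i ∈ Finset.univ.erase j, (a j - a i) := by
  rw [poleNumerator, Polynomial.eval_finsetSum, Finset.sum_eq_single j]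
  · rw [Polynomial.eval_mul, Polynomial.eval_C, Lagrange.eval_nodal]
  · intro i _ hij
    rw [Polynomial.eval_mul, Lagrange.eval_nodal_at_node, mul_zero]
    exact Finset.mem_erase.mpr ⟨hij.symm, Finset.mem_univ j⟩
  · exact fun h => absurd (Finset.mem_univ j) h

end PoleNumerator

lemma eval_eq_sum_basis {κ : Type*} [DecidableEq κ] {s : Finset κ} {v : κ → ℂ}
    (hv : Set.InjOn v s) {p : Polynomial ℂ} (hp : p.degree < s.card) (x : ℂ) :
    p.eval x = ∑ m ∈ s, p.eval (v m) * (Lagrange.basis s v m).eval x := by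
  conv_lhs => rw [Lagrange.eq_interpolate hv hp, Lagrange.interpolate_apply]
  simp [Polynomial.eval_finsetSum]

lemma norm_eval_nodal_le {ι : Type*} (s : Finset ι) (a : ι → ℂ) {x z : ℂ} {δ : ℝ}
    (hδ : 0 < δ) (ha : ∀ j ∈ s, δ ≤ ‖x - a j‖) :
    ‖(Lagrange.nodal s a).eval z‖
      ≤ (1 + ‖z - x‖ / δ) ^ s.card * ‖(Lagrange.nodal s a).eval x‖ := by
  rw [Lagrange.eval_nodal, Lagrange.eval_nodal, norm_prod, norm_prod, ← Finset.prod_const,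
    ← Finset.prod_mul_distrib]
  refine Finset.prod_le_prod (fun _ _ => norm_nonneg _) fun j hj => ?_
  have h1 : ‖z - a j‖ ≤ ‖z - x‖ + ‖x - a j‖ := by
    simpa using norm_add_le (z - x) (x - a j)
  have h2 : ‖z - x‖ ≤ ‖z - x‖ / δ * ‖x - a j‖ := by
    calc ‖z - x‖ = ‖z - x‖ / δ * δ := by field_simp
      _ ≤ _ := by gcongr; exact ha j hj
  linarith

section PoleResidue

variable {ι κ α : Type*} [Fintype ι] {l : Filter α}
  {a c : ι → ℂ} {aSeq cSeq : α → ι → ℂ}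

/-- Convergence at `2 * card ι` points forces every pole of the limit to be
approached by poles of the approximants. -/
lemma eventually_exists_pole_near {s : Finset κ} {v : κ → ℂ} (hv : Set.InjOn v s)
    (hs : s.card = 2 * Fintype.card ι)
    (ha : Function.Injective a) (hc : ∀ j, c j ≠ 0)
    (hva : ∀ m ∈ s, ∀ j, v m ≠ a j) (hvSeq : ∀ x, ∀ m ∈ s, ∀ j, v m ≠ aSeq x j)
    (h : ∀ m ∈ s, Tendsto (fun x => ∑ j, cSeq x j / (v m - aSeq x j) - ∑ j, c j / (v m - a j))
      l (nhds 0))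
    (k : ι) {δ : ℝ} (hδ : 0 < δ) :
    ∀ᶠ x in l, ∃ j, ‖aSeq x j - a k‖ < δ := by
  classical
  set P := poleNumerator a c
  set Q := Lagrange.nodal Finset.univ a
  have hP : 0 < ‖P.eval (a k)‖ := by
    rw [norm_pos_iff, eval_poleNumerator_node]
    refine mul_ne_zero (hc k) (Finset.prod_ne_zero_iff.mpr fun i hi => ?_)
    exact sub_ne_zero.mpr fun e => (Finset.mem_erase.mp hi).1 (ha e).symm
  have hK : Tendsto (fun x => ∑ m ∈ s,
      ‖∑ j, cSeq x j / (v m - aSeq x j) - ∑ j, c j / (v m - a j)‖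
        * (‖Q.eval (v m)‖ * ‖(Lagrange.basis s v m).eval (a k)‖
          * (1 + ‖v m - a k‖ / δ) ^ Fintype.card ι)) l (nhds 0) := by
    rw [← Finset.sum_const_zero (s := s)]
    refine tendsto_finsetSum _ fun m hm => ?_
    simpa using (h m hm).norm.mul_const _
  filter_upwards [hK.eventually_lt_const hP] with x hx
  by_contra! hfar
  have hfar' : ∀ j ∈ Finset.univ, δ ≤ ‖a k - aSeq x j‖ := fun j _ => by
    rw [norm_sub_rev]; exact hfar j
  set Px := poleNumerator (aSeq x) (cSeq x)
  set Qx := Lagrange.nodal Finset.univ (aSeq x)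
  have hQx : 0 < ‖Qx.eval (a k)‖ := by
    rw [norm_pos_iff, Lagrange.eval_nodal]
    exact Finset.prod_ne_zero_iff.mpr fun j hj => norm_pos_iff.mp (hδ.trans_le (hfar' j hj))
  have hdeg : (Px * Q - P * Qx).degree < s.card := by
    have key : ∀ p q : Polynomial ℂ, p.degree < Fintype.card ι → q.degree = Fintype.card ι →
        (p * q).degree < s.card := by
      intro p q hp hq
      rw [Polynomial.degree_mul, hq, hs, two_mul, Nat.cast_add]
      exact WithBot.add_lt_add_right (WithBot.coe_ne_bot) hp
    refine (Polynomial.degree_sub_le _ _).trans_lt (max_lt ?_ ?_)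
    · exact key _ _ (degree_poleNumerator_lt _ _) Lagrange.degree_nodal
    · exact key _ _ (degree_poleNumerator_lt _ _) Lagrange.degree_nodal
  have hW := eval_eq_sum_basis hv hdeg (a k)
  have hQk : Q.eval (a k) = 0 := Lagrange.eval_nodal_at_node (Finset.mem_univ k)
  rw [Polynomial.eval_sub, Polynomial.eval_mul, Polynomial.eval_mul, hQk, mul_zero, zero_sub] at hW
  have hle : ‖P.eval (a k)‖ * ‖Qx.eval (a k)‖ ≤ (∑ m ∈ s,
      ‖∑ j, cSeq x j / (v m - aSeq x j) - ∑ j, c j / (v m - a j)‖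
        * (‖Q.eval (v m)‖ * ‖(Lagrange.basis s v m).eval (a k)‖
          * (1 + ‖v m - a k‖ / δ) ^ Fintype.card ι)) * ‖Qx.eval (a k)‖ := by
    rw [← norm_mul, ← norm_neg, hW, Finset.sum_mul]
    refine norm_sum_le_of_le _ fun m hm => ?_
    rw [Polynomial.eval_sub, Polynomial.eval_mul, Polynomial.eval_mul,
      eval_poleNumerator _ _ (hva m hm), eval_poleNumerator _ _ (hvSeq x m hm)]
    have hb := norm_eval_nodal_le Finset.univ (aSeq x) (z := v m) hδ hfar'
    rw [Finset.card_univ] at hb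
    set A := ∑ j, cSeq x j / (v m - aSeq x j)
    set B := ∑ j, c j / (v m - a j)
    calc _ = ‖A - B‖ * (‖Q.eval (v m)‖ * ‖(Lagrange.basis s v m).eval (a k)‖)
          * ‖Qx.eval (v m)‖ := by
          simp only [← norm_mul]; congr 1; ring
      _ ≤ ‖A - B‖ * (‖Q.eval (v m)‖ * ‖(Lagrange.basis s v m).eval (a k)‖)
          * ((1 + ‖v m - a k‖ / δ) ^ Fintype.card ι * ‖Qx.eval (a k)‖) := by gcongr
      _ = _ := by ring
  exact absurd (le_of_mul_le_mul_right hle hQx) (not_le.mpr hx)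

/-- Once the poles converge, convergence at `card ι` points forces the residues to converge. -/
lemma tendsto_residue {s : Finset κ} {v : κ → ℂ} (hv : Set.InjOn v s)
    (hs : Fintype.card ι ≤ s.card) (ha : Function.Injective a)
    (hva : ∀ m ∈ s, ∀ j, v m ≠ a j) (hvSeq : ∀ x, ∀ m ∈ s, ∀ j, v m ≠ aSeq x j)
    (h : ∀ m ∈ s, Tendsto (fun x => ∑ j, cSeq x j / (v m - aSeq x j)) l
      (nhds (∑ j, c j / (v m - a j))))
    (hpole : ∀ j, Tendsto (fun x => aSeq x j) l (nhds (a j))) (k : ι) :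
    Tendsto (fun x => cSeq x k) l (nhds (c k)) := by
  classical
  have hlt : ∀ b d : ι → ℂ, (poleNumerator b d).degree < s.card := fun b d =>
    (degree_poleNumerator_lt b d).trans_le (by exact_mod_cast hs)
  have hnum : Tendsto (fun x => (poleNumerator (aSeq x) (cSeq x)).eval (aSeq x k)) l
      (nhds ((poleNumerator a c).eval (a k))) := by
    rw [eval_eq_sum_basis hv (hlt a c)]
    simp_rw [fun x => eval_eq_sum_basis hv (hlt (aSeq x) (cSeq x)) (aSeq x k)]
    refine tendsto_finsetSum _ fun m hm => Tendsto.mul ?_ ?_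
    · simp_rw [fun x => eval_poleNumerator (aSeq x) (cSeq x) (hvSeq x m hm),
        eval_poleNumerator a c (hva m hm), Lagrange.eval_nodal]
      exact (tendsto_finsetProd _ fun j _ => (hpole j).const_sub (v m)).mul (h m hm)
    · exact ((Lagrange.basis s v m).continuous.tendsto (a k)).comp (hpole k)
  simp_rw [eval_poleNumerator_node] at hnum
  have hden : Tendsto (fun x => ∏ i ∈ Finset.univ.erase k, (aSeq x k - aSeq x i)) l
      (nhds (∏ i ∈ Finset.univ.erase k, (a k - a i))) :=
    tendsto_finsetProd _ fun i _ => (hpole k).sub (hpole i)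
  have hne : ∏ i ∈ Finset.univ.erase k, (a k - a i) ≠ 0 :=
    Finset.prod_ne_zero_iff.mpr fun i hi =>
      sub_ne_zero.mpr fun e => (Finset.mem_erase.mp hi).1 (ha e).symm
  have hdiv := hnum.div hden hne
  rw [mul_div_cancel_right₀ _ hne] at hdiv
  refine hdiv.congr' ?_
  filter_upwards [hden.eventually_ne hne] with x hx
  exact mul_div_cancel_right₀ _ hx

/-- A finite family of distinct points, each approached by the values of `b x`, can be matched
with those values by permutations. -/
lemma exists_perm_tendsto {b : α → ι → ℂ} (ha : Function.Injective a)
    (h : ∀ k, ∀ δ > 0, ∀ᶠ x in l, ∃ j, ‖b x j - a k‖ < δ) :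
    ∃ σ : α → Equiv.Perm ι, ∀ k, Tendsto (fun x => b x (σ x k)) l (nhds (a k)) := by
  classical
  have hmin : ∀ x k, ∃ j, ∀ i, ‖b x j - a k‖ ≤ ‖b x i - a k‖ := fun x k =>
    haveI : Nonempty ι := ⟨k⟩
    Finite.exists_min fun j => ‖b x j - a k‖
  choose f hf using hmin
  have hlim : ∀ k, Tendsto (fun x => b x (f x k)) l (nhds (a k)) := fun k => by
    refine Metric.tendsto_nhds.mpr fun δ hδ => ?_
    filter_upwards [h k δ hδ] with x ⟨j, hj⟩
    rw [dist_eq_norm]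
    exact (hf x k j).trans_lt hj
  have hinj : ∀ᶠ x in l, Function.Injective (f x) := by
    have : ∀ᶠ x in l, ∀ k i, k ≠ i → b x (f x k) ≠ b x (f x i) := by
      refine eventually_all.mpr fun k => eventually_all.mpr fun i => ?_
      by_cases hki : k = i
      · exact Eventually.of_forall fun x hx => absurd hki hx
      · have hd := (hlim k).sub (hlim i)
        filter_upwards [hd.eventually_ne (sub_ne_zero.mpr (ha.ne hki))] with x hx _
        exact sub_ne_zero.mp hx
    filter_upwards [this] with x hx k i hki
    by_contra hne
    exact hx k i hne (by rw [hki])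
  refine ⟨fun x => if hx : Function.Injective (f x) then
    Equiv.ofBijective (f x) (Finite.injective_iff_bijective.mp hx) else 1, fun k => ?_⟩
  refine (hlim k).congr' ?_
  filter_upwards [hinj] with x hx
  simp [hx]

end PoleResidue

lemma memLp_two_inv_I_mul_sub {p : ℂ} (hp : p.re ≠ 0) :
    MemLp (fun ω : ℝ => (I * ω - p)⁻¹) 2 := by
  have hne : ∀ ω : ℝ, I * ω - p ≠ 0 := fun ω h => hp (by simpa using congrArg re h)
  have hcont : Continuous fun ω : ℝ => (I * ω - p)⁻¹ :=
    Continuous.inv₀ (by fun_prop) hne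
  rw [memLp_two_iff_integrable_sq_norm hcont.aestronglyMeasurable]
  have h := ((integrable_inv_one_add_sq.comp_div hp).comp_sub_right p.im).const_mul (p.re ^ 2)⁻¹
  refine h.congr (Eventually.of_forall fun ω => ?_)
  simp only [norm_inv, inv_pow, Complex.sq_norm, normSq_apply]
  rw [← mul_inv]
  congr 1
  simp
  field_simp

lemma tendsto_log_sub_log {p s : ℂ} (hp : p.re < 0) (hs : 0 < s.re) {ε : ℝ} {l : Filter ℝ}
    (hε : ε ≠ 0) (hl : Tendsto (fun ω => ε * ω) l atTop) :
    Tendsto (fun ω : ℝ => log (I * ω - p) - log (s - I * ω)) l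
      (nhds (log (I / ε) - log (-(I / ε)))) := by
  have hinv : Tendsto (fun ω => (((ε * ω)⁻¹ : ℝ) : ℂ)) l (nhds 0) := by
    rw [← ofReal_zero]
    exact (continuous_ofReal.tendsto 0).comp (tendsto_inv_atTop_zero.comp hl)
  have hslit : ∀ x : ℝ, x ≠ 0 → I / x ∈ slitPlane := fun x hx => by
    rw [mem_slitPlane_iff]; right; simp [div_ofReal_im, hx]
  have h1 : Tendsto (fun ω => log (I / ε - ((ε * ω)⁻¹ : ℝ) * p)) l (nhds (log (I / ε))) := by
    have := hinv.mul_const p |>.const_sub (I / ε)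
    rw [zero_mul, sub_zero] at this
    exact this.clog (hslit ε hε)
  have h2 : Tendsto (fun ω => log (((ε * ω)⁻¹ : ℝ) * s - I / ε)) l (nhds (log (-(I / ε)))) := by
    have := hinv.mul_const s |>.sub_const (I / ε)
    rw [zero_mul, zero_sub] at this
    exact this.clog (by simpa [neg_div, div_neg] using hslit (-ε) (neg_ne_zero.mpr hε))
  refine (h1.sub h2).congr' ?_
  filter_upwards [hl.eventually_gt_atTop 0] with ω hω
  have hω' : ((ε * ω : ℝ) : ℂ) ≠ 0 := by exact_mod_cast hω.ne'
  have hε' : (ε : ℂ) ≠ 0 := by exact_mod_cast hε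
  have hω'' : (ω : ℂ) ≠ 0 := by exact_mod_cast (right_ne_zero_of_mul hω.ne')
  have e1 : I * ω - p = ((ε * ω : ℝ) : ℂ) * (I / ε - ((ε * ω)⁻¹ : ℝ) * p) := by
    push_cast; field_simp
  have e2 : s - I * ω = ((ε * ω : ℝ) : ℂ) * (((ε * ω)⁻¹ : ℝ) * s - I / ε) := by
    push_cast; field_simp
  have n1 : I * ω - p ≠ 0 := fun h => hp.ne (by simpa using congrArg re h)
  have n2 : s - I * ω ≠ 0 := fun h => hs.ne' (by simpa using congrArg re h)
  have m1 := right_ne_zero_of_mul (e1 ▸ n1)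
  have m2 := right_ne_zero_of_mul (e2 ▸ n2)
  rw [e1, e2, log_ofReal_mul hω m1, log_ofReal_mul hω m2]
  ring

/-- Cauchy's formula on the imaginary axis for a simple pole. -/
lemma integral_inv_mul_inv_s18 {p s : ℂ} (hp : p.re < 0) (hs : 0 < s.re) :
    Integrable (fun ω : ℝ => (I * ω - p)⁻¹ * (I * ω - s)⁻¹) ∧
    ∫ ω : ℝ, (I * ω - p)⁻¹ * (I * ω - s)⁻¹ = -(2 * Real.pi / (s - p)) := by
  have hint : Integrable (fun ω : ℝ => (I * ω - p)⁻¹ * (I * ω - s)⁻¹) :=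
    (memLp_two_inv_I_mul_sub hp.ne).integrable_mul (memLp_two_inv_I_mul_sub hs.ne')
  refine ⟨hint, ?_⟩
  have hsp : s - p ≠ 0 := fun h => by
    have := congrArg re h
    simp only [sub_re, zero_re] at this
    linarith
  have hderiv : ∀ ω : ℝ, HasDerivAt
      (fun ω : ℝ => I / (s - p) * (log (I * ω - p) - log (s - I * ω)))
      ((I * ω - p)⁻¹ * (I * ω - s)⁻¹) ω := by
    intro ω
    have hI : HasDerivAt (fun ω : ℝ => I * (ω : ℂ)) I ω := by
      simpa using (hasDerivAt_id ω).ofReal_comp.const_mul I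
    have hp1 : I * ω - p ∈ slitPlane := by rw [mem_slitPlane_iff]; left; simpa using hp
    have hs1 : s - I * ω ∈ slitPlane := by rw [mem_slitPlane_iff]; left; simpa using hs
    have n1 := slitPlane_ne_zero hp1
    have n2 := slitPlane_ne_zero hs1
    have n3 : I * ω - s ≠ 0 := fun h => n2 (by rw [← neg_sub, h, neg_zero])
    have := (((hI.sub_const p).clog_real hp1).sub ((hI.const_sub s).clog_real hs1)).const_mul
      (I / (s - p))
    refine this.congr_deriv ?_
    rw [← neg_sub (I * (ω : ℂ)) s]
    field_simp
    rw [I_sq]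
    ring
  have htop := (tendsto_log_sub_log hp hs (l := atTop) one_ne_zero
    (by simp only [one_mul]; exact tendsto_id)).const_mul (I / (s - p))
  have hbot := (tendsto_log_sub_log hp hs (neg_ne_zero.mpr one_ne_zero)
    (by simpa using tendsto_neg_atBot_atTop)).const_mul (I / (s - p))
  rw [integral_of_hasDerivAt_of_tendsto hderiv hint hbot htop]
  simp only [ofReal_one, ofReal_neg, div_one, div_neg, neg_neg, log_I, log_neg_I]
  field_simp
  rw [I_sq]
  ring

/-- Point evaluation in the right half plane is bounded by the `L²` norm on the imaginary axis. -/
lemma norm_sum_div_le {ι : Type*} [Fintype ι] {a : ι → ℂ} (ha : ∀ j, (a j).re < 0) (c : ι → ℂ)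
    {s : ℂ} (hs : 0 < s.re) :
    2 * Real.pi * ‖∑ j, c j / (s - a j)‖
      ≤ √(∫ ω : ℝ, ‖∑ j, c j / (I * ω - a j)‖ ^ 2) * √(∫ ω : ℝ, ‖(I * ω - s)⁻¹‖ ^ 2) := by
  have hmem : MemLp (fun ω : ℝ => ∑ j, c j / (I * ω - a j)) 2 := by
    refine memLp_finsetSum _ fun j _ => ?_
    simpa only [div_eq_mul_inv] using (memLp_two_inv_I_mul_sub (ha j).ne).const_mul (c j)
  have hval : ∫ ω : ℝ, (∑ j, c j / (I * ω - a j)) * (I * ω - s)⁻¹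
      = -(2 * Real.pi * ∑ j, c j / (s - a j)) := by
    simp_rw [Finset.sum_mul, div_eq_mul_inv, mul_assoc]
    rw [integral_finsetSum _ fun j _ => (integral_inv_mul_inv_s18 (ha j) hs).1.const_mul (c j)]
    simp_rw [integral_const_mul, (integral_inv_mul_inv_s18 (ha _) hs).2, Finset.mul_sum,
      ← Finset.sum_neg_distrib]
    exact Finset.sum_congr rfl fun j _ => by ring
  have hCS := integral_mul_norm_le_Lp_mul_Lq (μ := volume) Real.HolderConjugate.two_two
    (by simpa using hmem) (by simpa using memLp_two_inv_I_mul_sub hs.ne')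
  calc 2 * Real.pi * ‖∑ j, c j / (s - a j)‖
      = ‖∫ ω : ℝ, (∑ j, c j / (I * ω - a j)) * (I * ω - s)⁻¹‖ := by
        rw [hval, norm_neg, norm_mul, norm_mul]
        simp [abs_of_pos Real.pi_pos]
    _ ≤ ∫ ω : ℝ, ‖∑ j, c j / (I * ω - a j)‖ * ‖(I * ω - s)⁻¹‖ := by
        refine (norm_integral_le_integral_norm _).trans_eq ?_
        simp_rw [norm_mul]
    _ ≤ _ := by
        simpa only [Real.sqrt_eq_rpow, Real.rpow_two] using hCS

/-- Convergence in `H₂` norm implies pointwise convergence in the right half plane. -/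
lemma tendsto_sum_div_sub {ι α : Type*} [Fintype ι] {l : Filter α} {a c : ι → ℂ}
    {aSeq cSeq : α → ι → ℂ} (ha : ∀ j, (a j).re < 0) (haSeq : ∀ x j, (aSeq x j).re < 0)
    (h : Tendsto (fun x => ∫ ω : ℝ, ‖(∑ j, cSeq x j / (I * ω - aSeq x j))
      - ∑ j, c j / (I * ω - a j)‖ ^ 2) l (nhds 0)) {s : ℂ} (hs : 0 < s.re) :
    Tendsto (fun x => (∑ j, cSeq x j / (s - aSeq x j)) - ∑ j, c j / (s - a j)) l (nhds 0) := by
  have hsum : ∀ x z, ∑ j : ι ⊕ ι, Sum.elim (cSeq x) (-c) j / (z - Sum.elim (aSeq x) a j)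
      = (∑ j, cSeq x j / (z - aSeq x j)) - ∑ j, c j / (z - a j) := fun x z => by
    simp [Fintype.sum_sum_type, neg_div, sub_eq_add_neg]
  have hbound := fun x => norm_sum_div_le (a := Sum.elim (aSeq x) a)
    (by rintro (j | j); exacts [haSeq x j, ha j]) (Sum.elim (cSeq x) (-c)) hs
  simp_rw [hsum] at hbound
  rw [tendsto_zero_iff_norm_tendsto_zero]
  have hlim := (h.sqrt.mul_const √(∫ ω : ℝ, ‖(I * ω - s)⁻¹‖ ^ 2)).div_const (2 * Real.pi)
  rw [Real.sqrt_zero, zero_mul, zero_div] at hlim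
  refine squeeze_zero (fun _ => norm_nonneg _) (fun x => ?_) hlim
  rw [le_div_iff₀' (by positivity)]
  exact hbound x

/-- If `Hᵣℓ(z) = Σⱼ ρⱼℓ/(z − λⱼℓ)` converges in the H₂ norm to
`Hᵣ(z) = Σⱼ ρⱼ/(z − λⱼ)` with distinct stable poles `λⱼ` and nonzero residues `ρⱼ`,
and for all sufficiently large `ℓ` the poles `λⱼℓ` are distinct (and stable), then after a
suitable reordering (a permutation for each `ℓ`) the poles and residues converge:
`λⱼℓ → λⱼ` and `ρⱼℓ → ρⱼ`. -/
theorem stmt_18 (r : ℕ) (lam ρ : Fin r → ℂ)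
    (hstab : ∀ j, (lam j).re < 0) (hdist : Function.Injective lam)
    (hρ : ∀ j, ρ j ≠ 0)
    (lamSeq ρSeq : ℕ → Fin r → ℂ)
    (hstabSeq : ∀ ℓ j, (lamSeq ℓ j).re < 0)
    (hdistSeq : ∀ᶠ ℓ in atTop, Function.Injective (lamSeq ℓ))
    (hconv : Tendsto (fun ℓ : ℕ => (1 / (2 * Real.pi)) *
        ∫ ω : ℝ, ‖(∑ j, ρSeq ℓ j / (I * ω - lamSeq ℓ j))
          - ∑ j, ρ j / (I * ω - lam j)‖ ^ 2) atTop (nhds 0)) :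
    ∃ σ : ℕ → Equiv.Perm (Fin r), ∀ j,
      Tendsto (fun ℓ => lamSeq ℓ (σ ℓ j)) atTop (nhds (lam j)) ∧
      Tendsto (fun ℓ => ρSeq ℓ (σ ℓ j)) atTop (nhds (ρ j)) := by
  have hconv' : Tendsto (fun ℓ : ℕ => ∫ ω : ℝ, ‖(∑ j, ρSeq ℓ j / (I * ω - lamSeq ℓ j))
      - ∑ j, ρ j / (I * ω - lam j)‖ ^ 2) atTop (nhds 0) := by
    simpa [← mul_assoc, mul_comm, mul_left_comm, Real.pi_ne_zero] using
      hconv.const_mul (2 * Real.pi)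
  have hre : ∀ m : ℕ, 0 < ((m : ℂ) + 1).re := fun m => by
    rw [add_re, natCast_re, one_re]; positivity
  have hnode : ∀ (m : ℕ) (p : ℂ), p.re < 0 → (m : ℂ) + 1 ≠ p := fun m p hp h =>
    lt_asymm hp (h ▸ hre m)
  have hv : Function.Injective fun m : ℕ => (m : ℂ) + 1 := fun m n h => by simpa using h
  have hpt := fun m : ℕ => tendsto_sum_div_sub hstab hstabSeq hconv' (hre m)
  obtain ⟨σ, hσ⟩ := exists_perm_tendsto hdist fun k δ hδ =>
    eventually_exists_pole_near (s := Finset.range (2 * r)) hv.injOn (by simp) hdist hρ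
      (fun m _ j => hnode m _ (hstab j)) (fun ℓ m _ j => hnode m _ (hstabSeq ℓ j))
      (fun m _ => hpt m) k hδ
  refine ⟨σ, fun j => ⟨hσ j, ?_⟩⟩
  refine tendsto_residue (s := Finset.range r) (aSeq := fun ℓ j => lamSeq ℓ (σ ℓ j))
    (cSeq := fun ℓ j => ρSeq ℓ (σ ℓ j)) hv.injOn (by simp) hdist
    (fun m _ j => hnode m _ (hstab j)) (fun ℓ m _ j => hnode m _ (hstabSeq ℓ _))
    (fun m _ => ?_) hσ j
  refine (tendsto_sub_nhds_zero_iff.mp (hpt m)).congr fun ℓ => ?_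
  exact (Equiv.sum_comp (σ ℓ) fun j => ρSeq ℓ j / ((m : ℂ) + 1 - lamSeq ℓ j)).symm
end
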